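/- Let d ≥ 2, let R ∈ O(d+1), and let g be a smooth τ-invariant Riemannian metric on N = ℝ × S^d. Then there exists a nonconstant locally absolutely continuous curve γ : ℝ → N that is a Class-A minimizer: for all t₁ ≤ t₂ and every absolutely continuous curve σ : [t₁,t₂] → N with σ(t₁) = γ(t₁) and σ(t₂) = γ(t₂), the g-length of γ restricted to [t₁,t₂] is at most the g-length of σ. In particular, every smooth Riemannian metric on S¹ × S^d with d ≥ 2 admits a Class-A geodesic. -/

import Mathlib

open MeasureTheory Set Filter

noncomputable section

/-- The ambient space `V d = ℝ × ℝ^{d+1}` containing `N = ℝ × S^d`. -/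
abbrev V (d : ℕ) := ℝ × EuclideanSpace ℝ (Fin (d + 1))

/-- A curve in `V d` together with a choice of a.e. derivative. -/
structure ACIn (d : ℕ) where
  f : ℝ → V d
  f' : ℝ → V d

/-- `c` is an absolutely continuous curve on `[a,b]` with values in `N = ℝ × S^d`. -/
def IsACOnN {d : ℕ} (c : ACIn d) (a b : ℝ) : Prop :=
  IntegrableOn c.f' (Icc a b) volume ∧
  (∀ t ∈ Icc a b, c.f t = c.f a + ∫ s in a..t, c.f' s) ∧
  (∀ t ∈ Icc a b, ‖(c.f t).2‖ = 1)

/-- The `g`-length of the curve `c` on `[a,b]`, for a metric `g` on `V d` given as a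
field of bilinear forms. -/
def glen {d : ℕ} (g : V d → V d →L[ℝ] V d →L[ℝ] ℝ) (c : ACIn d) (a b : ℝ) : ℝ :=
  ∫ t in a..b, Real.sqrt (g (c.f t) (c.f' t) (c.f' t))

/-! For the Riemannian distance of `g`, `N` is a length space of infinite diameter in which the
slabs `[a, b] × S^d` are compact. Almost shortest curves of length about `2n`, moved by a power of
`τ` so that their midpoint lies over `[0, 1]`, converge pointwise along an ultrafilter, and the
limit is an isometry `γ : ℝ → N`. Near a point `p` the distance from `p` is bounded below by almost
the norm of `g p`, so the `1`-Lipschitz curve `γ` has `g`-speed at most `1`. Its length between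
times `t₁` and `t₂` is thus at most `t₂ - t₁`, which is the distance of its endpoints.
-/

/-! ### Lines in length spaces -/

section Lines

open Metric
open scoped ENNReal NNReal Topology

variable {α X : Type*} [PseudoEMetricSpace X]

/-- A map is an `ε`-almost isometry on `s` if it does not increase distances between points of `s`
and decreases them by at most `ε`. -/
def AlmostIsometryOn [PseudoEMetricSpace α] (ε : ℝ≥0∞) (f : α → X) (s : Set α) : Prop :=
  ∀ u ∈ s, ∀ v ∈ s, edist (f u) (f v) ≤ edist u v ∧ edist u v ≤ edist (f u) (f v) + ε

variable (X) in
/-- A length space: points at distance less than `ℓ` are joined by a curve of length at most `ℓ`,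
encoded as a `1`-Lipschitz map which runs through it on `[0, ℓ]`. -/
def IsLengthSpace : Prop :=
  ∀ (p q : X) (ℓ : ℝ≥0), edist p q < ℓ → ∃ f : ℝ → X, LipschitzWith 1 f ∧ f 0 = p ∧ f ℓ = q

lemma AlmostIsometryOn.mono [PseudoEMetricSpace α] {ε ε' : ℝ≥0∞} {f : α → X} {s t : Set α}
    (hf : AlmostIsometryOn ε f t) (hε : ε ≤ ε') (hst : s ⊆ t) : AlmostIsometryOn ε' f s :=
  fun u hu v hv => ⟨(hf u (hst hu) v (hst hv)).1,
    (hf u (hst hu) v (hst hv)).2.trans (by gcongr)⟩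

lemma AlmostIsometryOn.comp {β Y : Type*} [PseudoEMetricSpace α] [PseudoEMetricSpace β]
    [PseudoEMetricSpace Y] {ε : ℝ≥0∞} {f : α → X} {s : Set α} (hf : AlmostIsometryOn ε f s)
    {φ : X → Y} (hφ : Isometry φ) {ψ : β → α} (hψ : Isometry ψ) :
    AlmostIsometryOn ε (φ ∘ f ∘ ψ) (ψ ⁻¹' s) := fun u hu v hv => by
  simpa only [Function.comp_apply, hφ.edist_eq, hψ.edist_eq] using hf _ hu _ hv

lemma almostIsometryOn_Icc_of_lipschitzWith {f : ℝ → X} (hf : LipschitzWith 1 f) {a b : ℝ}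
    {ε : ℝ≥0∞} (hab : edist a b ≤ edist (f a) (f b) + ε) : AlmostIsometryOn ε f (Icc a b) := by
  have hshort : ∀ u v, edist (f u) (f v) ≤ edist u v := fun u v => by simpa using hf u v
  intro u hu v hv
  refine ⟨hshort u v, ?_⟩
  wlog huv : u ≤ v generalizing u v
  · simpa only [edist_comm] using this v hv u hu (le_of_not_ge huv)
  have hedist : ∀ {x y : ℝ}, x ≤ y → edist x y = ENNReal.ofReal (y - x) := fun hxy => by
    rw [edist_comm, edist_dist, Real.dist_eq, abs_of_nonneg (sub_nonneg.2 hxy)]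
  have hsplit : edist a b = edist a u + edist v b + edist u v := by
    rw [hedist (hu.1.trans hu.2), hedist hu.1, hedist hv.2, hedist huv,
      ← ENNReal.ofReal_add (sub_nonneg.2 hu.1) (sub_nonneg.2 hv.2),
      ← ENNReal.ofReal_add (by linarith [hu.1, hv.2]) (sub_nonneg.2 huv)]
    ring_nf
  have htriangle : edist (f a) (f b) ≤ edist a u + edist v b + edist (f u) (f v) :=
    calc edist (f a) (f b) ≤ edist (f a) (f u) + edist (f u) (f v) + edist (f v) (f b) :=
          edist_triangle4 _ _ _ _
      _ ≤ edist a u + edist (f u) (f v) + edist v b := by gcongr <;> exact hshort _ _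
      _ = edist a u + edist v b + edist (f u) (f v) := by ring
  have hfin : edist a u + edist v b ≠ ⊤ := by simp [edist_ne_top]
  rw [← ENNReal.add_le_add_iff_left hfin, ← hsplit, ← add_assoc]
  exact hab.trans (by gcongr)

lemma isometry_of_tendsto_almostIsometryOn {ι : Type*} {l : Filter ι} [l.NeBot]
    [PseudoEMetricSpace α] {s : ι → Set α} {ε : ι → ℝ≥0∞} {η : ι → α → X} {γ : α → X}
    (hs : ∀ x, ∀ᶠ i in l, x ∈ s i) (hε : Tendsto ε l (𝓝 0))
    (hη : ∀ i, AlmostIsometryOn (ε i) (η i) (s i))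
    (hγ : ∀ x, Tendsto (fun i => η i x) l (𝓝 (γ x))) : Isometry γ := by
  intro x y
  have hlim : Tendsto (fun i => edist (η i x) (η i y)) l (𝓝 (edist (γ x) (γ y))) :=
    (hγ x).edist (hγ y)
  have hmem := (hs x).and (hs y)
  refine le_antisymm (le_of_tendsto hlim ?_)
    (ge_of_tendsto (by simpa using hlim.add hε) ?_)
  · exact hmem.mono fun i hi => (hη i x hi.1 y hi.2).1
  · exact hmem.mono fun i hi => (hη i x hi.1 y hi.2).2

/-- The maps `η n` converge pointwise along an ultrafilter because `η n x` stays in the thickening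
of `K` of radius `dist x o`. -/
lemma exists_isometry_of_almostIsometryOn [PseudoMetricSpace α] {K : Set X}
    (hK : ∀ r, IsCompact (cthickening r K)) (o : α) {ε : ℕ → ℝ≥0∞}
    (hε : Tendsto ε atTop (𝓝 0)) {η : ℕ → α → X}
    (hη : ∀ n, AlmostIsometryOn (ε n) (η n) (closedBall o n)) (hηK : ∀ n, η n o ∈ K) :
    ∃ γ : α → X, Isometry γ := by
  have hU : (hyperfilter ℕ : Filter ℕ) ≤ atTop := Nat.hyperfilter_le_atTop
  have hball : ∀ x : α, ∀ᶠ n : ℕ in hyperfilter ℕ, x ∈ closedBall o (n : ℝ) := fun x =>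
    hU (tendsto_natCast_atTop_atTop.eventually_ge_atTop (dist x o))
  have hlim : ∀ x, ∃ y, Tendsto (fun n => η n x) (hyperfilter ℕ) (𝓝 y) := by
    intro x
    have hmem : ∀ᶠ n in hyperfilter ℕ, η n x ∈ cthickening (dist x o) K := by
      filter_upwards [hball x] with n hn
      refine mem_cthickening_of_edist_le _ _ _ _ (hηK n) ?_
      rw [← edist_dist]
      exact (hη n x hn o (mem_closedBall_self n.cast_nonneg)).1
    obtain ⟨y, -, hy⟩ :=
      (hK (dist x o)).ultrafilter_le_nhds' ((hyperfilter ℕ).map fun n => η n x) hmem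
    exact ⟨y, hy⟩
  choose γ hγ using hlim
  exact ⟨γ, isometry_of_tendsto_almostIsometryOn hball (hε.mono_left hU) hη hγ⟩

theorem IsLengthSpace.exists_isometry_real (hX : IsLengthSpace X) {K : Set X}
    (hK : ∀ r, IsCompact (cthickening r K)) (hmove : ∀ x, ∃ φ : X → X, Isometry φ ∧ φ x ∈ K)
    (hunb : ∀ r : ℝ≥0, ∃ p q : X, r ≤ edist p q ∧ edist p q ≠ ⊤) :
    ∃ γ : ℝ → X, Isometry γ := by
  have halmost : ∀ n : ℕ, ∃ η : ℝ → X,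
      AlmostIsometryOn ((n + 1 : ℝ≥0∞)⁻¹) η (closedBall 0 n) ∧ η 0 ∈ K := by
    intro n
    obtain ⟨p, q, hpq, hfin⟩ := hunb (2 * n)
    obtain ⟨ℓ, hℓ, hℓε⟩ := ENNReal.lt_iff_exists_nnreal_btwn.1
      (ENNReal.lt_add_right hfin (b := (n + 1 : ℝ≥0∞)⁻¹) (by simp))
    obtain ⟨f, hf, h0, h1⟩ := hX p q ℓ hℓ
    have hnℓ : 2 * (n : ℝ) ≤ ℓ := by exact_mod_cast hpq.trans hℓ.le
    have hshort : edist 0 (ℓ : ℝ) ≤ edist (f 0) (f ℓ) + (n + 1 : ℝ≥0∞)⁻¹ := by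
      rw [h0, h1]
      simpa [edist_dist] using hℓε.le
    obtain ⟨φ, hφ, hφK⟩ := hmove (f n)
    refine ⟨φ ∘ f ∘ (n + ·), ((almostIsometryOn_Icc_of_lipschitzWith hf hshort).comp hφ
      (isometry_add_left _)).mono le_rfl fun s hs => ?_, by simpa using hφK⟩
    rw [Real.closedBall_eq_Icc] at hs
    exact ⟨by linarith [hs.1], by linarith [hs.2]⟩
  choose η hη hηK using halmost
  refine exists_isometry_of_almostIsometryOn hK 0 ?_ hη hηK
  exact_mod_cast ENNReal.tendsto_inv_nat_nhds_zero.comp (tendsto_add_atTop_nat 1)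

end Lines

/-! ### Norms of bilinear forms -/

section FormNorm

variable {E : Type*} [NormedAddCommGroup E] [NormedSpace ℝ E] {B B' : E →L[ℝ] E →L[ℝ] ℝ}

/-- The norm `√(B v v)` of a vector with respect to a positive semidefinite form `B`; for `B = g q`
it is the integrand of the `g`-length. The square root gives it the value `0` where `B v v < 0`. -/
def formNorm (B : E →L[ℝ] E →L[ℝ] ℝ) (v : E) : ℝ := √(B v v)

lemma formNorm_smul (B : E →L[ℝ] E →L[ℝ] ℝ) (a : ℝ) (v : E) :
    formNorm B (a • v) = |a| * formNorm B v := by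
  simp only [formNorm, map_smul, smul_apply, smul_eq_mul]
  rw [← mul_assoc, ← sq, Real.sqrt_mul (sq_nonneg a), Real.sqrt_sq_eq_abs]

lemma continuous_formNorm :
    Continuous fun x : (E →L[ℝ] E →L[ℝ] ℝ) × E => formNorm x.1 x.2 := by
  simp only [formNorm]
  fun_prop

lemma nonneg_of_mul_norm_le_formNorm {c : ℝ} (hc : 0 < c) {v : E}
    (hv : c * ‖v‖ ≤ formNorm B v) : 0 ≤ B v v := by
  by_contra! hneg
  rw [formNorm, Real.sqrt_eq_zero_of_nonpos hneg.le] at hv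
  obtain rfl : v = 0 := norm_le_zero_iff.1 (nonpos_of_mul_nonpos_right hv hc)
  simp at hneg

lemma apply_le_formNorm_mul_formNorm (hsymm : ∀ v w, B v w = B w v) (hB : ∀ v, 0 ≤ B v v)
    (v w : E) : B v w ≤ formNorm B v * formNorm B w := by
  rw [formNorm, formNorm, ← Real.sqrt_mul (hB v)]
  refine Real.le_sqrt_of_sq_le ?_
  exact LinearMap.BilinForm.apply_sq_le_of_symm
    (ContinuousLinearMap.toLinearMap₁₂ B) hB ⟨hsymm⟩ v w

/-- Pair the integral `w` of `h` with `w` itself and use Cauchy–Schwarz under the integral sign. -/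
lemma formNorm_integral_le [CompleteSpace E] (hsymm : ∀ v w, B v w = B w v)
    (hB : ∀ v, 0 ≤ B v v) {a b : ℝ} (hab : a ≤ b) {h : ℝ → E}
    (hh : IntervalIntegrable h volume a b)
    (hBh : IntervalIntegrable (fun t => formNorm B (h t)) volume a b) :
    formNorm B (∫ t in a..b, h t) ≤ ∫ t in a..b, formNorm B (h t) := by
  set w := ∫ t in a..b, h t
  have hw0 : 0 ≤ formNorm B w := Real.sqrt_nonneg _
  have hBw : IntervalIntegrable (fun t => B w (h t)) volume a b :=
    ⟨(B w).integrable_comp hh.1, (B w).integrable_comp hh.2⟩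
  have hmul : formNorm B w * formNorm B w ≤ formNorm B w * ∫ t in a..b, formNorm B (h t) :=
    calc formNorm B w * formNorm B w = B w w := Real.mul_self_sqrt (hB w)
      _ = ∫ t in a..b, B w (h t) := by
          rw [(B w).intervalIntegral_comp_comm hh]
      _ ≤ ∫ t in a..b, formNorm B w * formNorm B (h t) :=
          intervalIntegral.integral_mono_on hab hBw (hBh.const_mul _) fun t _ =>
            apply_le_formNorm_mul_formNorm hsymm hB w (h t)
      _ = formNorm B w * ∫ t in a..b, formNorm B (h t) :=
          intervalIntegral.integral_const_mul _ _
  rcases hw0.eq_or_lt with h0 | hpos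
  · rw [← h0]
    exact intervalIntegral.integral_nonneg hab fun t _ => Real.sqrt_nonneg _
  · exact le_of_mul_le_mul_left hmul hpos

lemma mul_formNorm_le_of_norm_sub_le {c k : ℝ} (hc : 0 < c) (hk0 : 0 ≤ k) (hk1 : k ≤ 1) {v : E}
    (hlower : c * ‖v‖ ≤ formNorm B v) (hBB' : ‖B' - B‖ ≤ (1 - k ^ 2) * c ^ 2) :
    k * formNorm B v ≤ formNorm B' v := by
  have hB := nonneg_of_mul_norm_le_formNorm hc hlower
  have hk : 0 ≤ 1 - k ^ 2 := by nlinarith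
  have hsq : c ^ 2 * ‖v‖ ^ 2 ≤ B v v := by
    rw [← mul_pow, ← Real.sq_sqrt hB]
    exact pow_le_pow_left₀ (by positivity) hlower 2
  have hdiff : |B' v v - B v v| ≤ (1 - k ^ 2) * B v v :=
    calc |B' v v - B v v| ≤ ‖B' - B‖ * ‖v‖ * ‖v‖ := (B' - B).le_opNorm₂ v v
      _ ≤ (1 - k ^ 2) * c ^ 2 * ‖v‖ * ‖v‖ := by gcongr
      _ = (1 - k ^ 2) * (c ^ 2 * ‖v‖ ^ 2) := by ring
      _ ≤ (1 - k ^ 2) * B v v := by gcongr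
  rw [formNorm, ← Real.sqrt_sq hk0, ← Real.sqrt_mul (sq_nonneg k)]
  exact Real.sqrt_le_sqrt (by linarith [(abs_le.1 hdiff).1])

/-- By homogeneity it suffices to bound `√(B v v)` over the compact set `A × {‖v‖ = 1}`. -/
lemma exists_norm_bounds_formNorm [ProperSpace E] {Y : Type*} [TopologicalSpace Y] {A : Set Y}
    (hA : IsCompact A) {B : Y → E →L[ℝ] E →L[ℝ] ℝ} (hcont : ContinuousOn B A)
    (hpos : ∀ y ∈ A, ∀ v ≠ 0, 0 < B y v v) :
    ∃ c C, 0 < c ∧ ∀ y ∈ A, ∀ v, c * ‖v‖ ≤ formNorm (B y) v ∧ formNorm (B y) v ≤ C * ‖v‖ := by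
  set S : Set (Y × E) := A ×ˢ Metric.sphere 0 1
  have hS : IsCompact S := hA.prod (isCompact_sphere _ _)
  have hF : ContinuousOn (fun x : Y × E => formNorm (B x.1) x.2) S :=
    continuous_formNorm.comp_continuousOn
      ((hcont.comp continuousOn_fst fun x hx => hx.1).prodMk continuousOn_snd)
  have hFpos : ∀ x ∈ S, 0 < formNorm (B x.1) x.2 := fun x hx =>
    Real.sqrt_pos.2 (hpos x.1 hx.1 x.2 (ne_zero_of_mem_unit_sphere ⟨x.2, hx.2⟩))
  obtain ⟨c, hc, hlower⟩ := hS.exists_forall_le' hF hFpos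
  obtain ⟨C, hupper⟩ := hS.exists_bound_of_continuousOn hF
  refine ⟨c, C, hc, fun y hy v => ?_⟩
  obtain rfl | hv := eq_or_ne v 0
  · simp [formNorm]
  have hmem : (y, ‖v‖⁻¹ • v) ∈ S := ⟨hy, by simp [norm_smul, hv]⟩
  have hscale : formNorm (B y) v = formNorm (B y) (‖v‖⁻¹ • v) * ‖v‖ := by
    rw [formNorm_smul, abs_of_nonneg (by positivity)]
    field_simp
  rw [hscale]
  exact ⟨by gcongr; exact hlower _ hmem,
    by gcongr; exact (Real.le_norm_self _).trans (hupper _ hmem)⟩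

end FormNorm

lemma integral_deriv_eq_sub_of_lipschitzWith {E : Type*} [NormedAddCommGroup E] [NormedSpace ℝ E]
    [FiniteDimensional ℝ E] {K : NNReal} {f : ℝ → E} (hf : LipschitzWith K f) (a b : ℝ) :
    IntervalIntegrable (deriv f) volume a b ∧ ∫ t in a..b, deriv f t = f b - f a := by
  have hint : IntervalIntegrable (deriv f) volume a b := by
    rw [intervalIntegrable_iff']
    exact Measure.integrableOn_of_bounded (M := K) (by simp)
      (aestronglyMeasurable_deriv f _)
      (Eventually.of_forall fun t => norm_deriv_le_of_lipschitz hf)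
  refine ⟨hint, ?_⟩
  -- The fundamental theorem of calculus is available for real functions: test with functionals.
  refine (SeparatingDual.eq_iff_forall_dual_eq (R := ℝ)).2 fun ψ => ?_
  have hac : AbsolutelyContinuousOnInterval (fun t => ψ (f t)) a b :=
    ((ψ.lipschitz.comp hf).lipschitzOnWith (s := uIcc a b)).absolutelyContinuousOnInterval
  rw [← ψ.intervalIntegral_comp_comm hint, map_sub, ← hac.integral_deriv_eq_sub]
  refine intervalIntegral.integral_congr_ae ?_
  filter_upwards [hf.ae_differentiableAt_real] with x hx _
  exact (ψ.hasFDerivAt.comp_hasDerivAt x hx.hasDerivAt).deriv.symm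

/-! ### Absolutely continuous curves and their length -/

section Curves

open scoped NNReal

variable {d : ℕ} {g : V d → V d →L[ℝ] V d →L[ℝ] ℝ} {σ ρ : ACIn d} {a b b' c K : ℝ} {C : ℝ≥0}

/-- The hypersurface `N = ℝ × S^d` of `V d`. -/
def sphereCylinder (d : ℕ) : Set (V d) := {q | ‖q.2‖ = 1}

lemma IsACOnN.intervalIntegrable (h : IsACOnN σ a b) {s t : ℝ} (hs : s ∈ Icc a b)
    (ht : t ∈ Icc a b) : IntervalIntegrable σ.f' volume s t :=
  (h.1.mono_set (uIcc_subset_Icc hs ht)).intervalIntegrable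

lemma IsACOnN.integral_eq_sub (h : IsACOnN σ a b) {s t : ℝ} (hs : s ∈ Icc a b)
    (ht : t ∈ Icc a b) : ∫ u in s..t, σ.f' u = σ.f t - σ.f s := by
  have ha : a ∈ Icc a b := left_mem_Icc.2 (hs.1.trans hs.2)
  rw [h.2.1 t ht, h.2.1 s hs, ← intervalIntegral.integral_add_adjacent_intervals
    (h.intervalIntegrable ha hs) (h.intervalIntegrable hs ht)]
  abel

lemma IsACOnN.mem_sphereCylinder (h : IsACOnN σ a b) {t : ℝ} (ht : t ∈ Icc a b) :
    σ.f t ∈ sphereCylinder d := h.2.2 t ht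

lemma IsACOnN.mono (h : IsACOnN σ a b) {s t : ℝ} (hs : a ≤ s) (ht : t ≤ b) : IsACOnN σ s t := by
  have hsub : Icc s t ⊆ Icc a b := Icc_subset_Icc hs ht
  refine ⟨h.1.mono_set hsub, fun u hu => ?_, fun u hu => h.2.2 u (hsub hu)⟩
  rw [h.integral_eq_sub (hsub (left_mem_Icc.2 (hu.1.trans hu.2))) (hsub hu), add_sub_cancel]

lemma IsACOnN.continuousOn (h : IsACOnN σ a b) : ContinuousOn σ.f (Icc a b) := by
  rcases le_or_gt a b with hab | hab
  · have hprim : ContinuousOn (fun t => σ.f a + ∫ s in a..t, σ.f' s) (uIcc a b) :=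
      continuousOn_const.add (intervalIntegral.continuousOn_primitive_interval
        (by rw [uIcc_of_le hab]; exact h.1))
    rw [uIcc_of_le hab] at hprim
    exact hprim.congr h.2.1
  · simp [Icc_eq_empty_of_lt hab]

lemma IsACOnN.congr (h : IsACOnN σ a b) (hf : EqOn σ.f ρ.f (Icc a b))
    (hf' : EqOn σ.f' ρ.f' (Ioc a b)) : IsACOnN ρ a b := by
  refine ⟨?_, fun t ht => ?_, fun t ht => hf ht ▸ h.2.2 t ht⟩
  · rw [integrableOn_Icc_iff_integrableOn_Ioc]
    exact (h.1.mono_set Ioc_subset_Icc_self).congr_fun hf' measurableSet_Ioc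
  · rw [← hf ht, ← hf (left_mem_Icc.2 (ht.1.trans ht.2)), h.2.1 t ht]
    congr 1
    refine intervalIntegral.integral_congr_ae (Eventually.of_forall fun s hs => ?_)
    rw [uIoc_of_le ht.1] at hs
    exact hf' ⟨hs.1, hs.2.trans ht.2⟩

lemma glen_congr (hab : a ≤ b) (hf : EqOn σ.f ρ.f (Icc a b)) (hf' : EqOn σ.f' ρ.f' (Ioc a b)) :
    glen g σ a b = glen g ρ a b := by
  refine intervalIntegral.integral_congr_ae (Eventually.of_forall fun s hs => ?_)
  rw [uIoc_of_le hab] at hs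
  rw [hf (Ioc_subset_Icc_self hs), hf' hs]

lemma glen_nonneg (hab : a ≤ b) : 0 ≤ glen g σ a b :=
  intervalIntegral.integral_nonneg hab fun _ _ => Real.sqrt_nonneg _

lemma IsACOnN.trans (h : IsACOnN σ a b) (h' : IsACOnN σ b b') (hab : a ≤ b) (hbb' : b ≤ b') :
    IsACOnN σ a b' := by
  have hunion : Icc a b ∪ Icc b b' = Icc a b' := Icc_union_Icc_eq_Icc hab hbb'
  refine ⟨hunion ▸ h.1.union h'.1, fun t ht => ?_,
    hunion ▸ fun t ht => ht.elim (h.2.2 t) (h'.2.2 t)⟩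
  rcases le_total t b with htb | hbt
  · exact h.2.1 t ⟨ht.1, htb⟩
  · have hb : b ∈ Icc a b := right_mem_Icc.2 hab
    have hb' : b ∈ Icc b b' := left_mem_Icc.2 hbb'
    rw [h'.2.1 t ⟨hbt, ht.2⟩, h.2.1 b hb, add_assoc,
      intervalIntegral.integral_add_adjacent_intervals
        (h.intervalIntegrable (left_mem_Icc.2 hab) hb) (h'.intervalIntegrable hb' ⟨hbt, ht.2⟩)]

/-- The curve `σ` run backwards: time `t` of the reflected curve is time `e - t` of `σ`. -/
def ACIn.reflect (σ : ACIn d) (e : ℝ) : ACIn d := ⟨fun t => σ.f (e - t), fun t => -σ.f' (e - t)⟩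

lemma IsACOnN.reflect (h : IsACOnN σ a b) (e : ℝ) : IsACOnN (σ.reflect e) (e - b) (e - a) := by
  have hmem : ∀ t ∈ Icc (e - b) (e - a), e - t ∈ Icc a b := fun t ht =>
    ⟨by linarith [ht.2], by linarith [ht.1]⟩
  refine ⟨?_, fun t ht => ?_, fun t ht => h.2.2 _ (hmem t ht)⟩
  · rcases le_or_gt a b with hab | hab
    · have hint := (h.intervalIntegrable (left_mem_Icc.2 hab) (right_mem_Icc.2 hab)).comp_sub_left e
      rw [← intervalIntegrable_iff_integrableOn_Icc_of_le (by linarith)]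
      exact hint.symm.neg
    · simp [Icc_eq_empty_of_lt (show e - a < e - b by linarith)]
  · have hb : b ∈ Icc a b := right_mem_Icc.2 ((hmem t ht).1.trans (hmem t ht).2)
    simp only [ACIn.reflect, intervalIntegral.integral_neg,
      intervalIntegral.integral_comp_sub_left, sub_sub_cancel,
      h.integral_eq_sub (hmem t ht) hb]
    abel

lemma glen_reflect (σ : ACIn d) (a b e : ℝ) :
    glen g (σ.reflect e) (e - b) (e - a) = glen g σ a b := by
  simp only [glen, ACIn.reflect, map_neg, neg_apply, neg_neg]
  rw [intervalIntegral.integral_comp_sub_left (fun t => √(g (σ.f t) (σ.f' t) (σ.f' t)))]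
  simp

/-- The curve which follows `σ` until time `b` and `ρ` afterwards. -/
def ACIn.append (σ ρ : ACIn d) (b : ℝ) : ACIn d :=
  ⟨(Iic b).piecewise σ.f ρ.f, (Iic b).piecewise σ.f' ρ.f'⟩

lemma ACIn.append_eqOn_left (σ ρ : ACIn d) (b : ℝ) :
    EqOn (σ.append ρ b).f σ.f (Iic b) ∧ EqOn (σ.append ρ b).f' σ.f' (Iic b) :=
  ⟨piecewise_eqOn _ _ _, piecewise_eqOn _ _ _⟩

lemma ACIn.append_eqOn_right (hb : σ.f b = ρ.f b) :
    EqOn (σ.append ρ b).f ρ.f (Ici b) ∧ EqOn (σ.append ρ b).f' ρ.f' (Ioi b) := by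
  refine ⟨fun t ht => ?_, compl_Iic (a := b) ▸ piecewise_eqOn_compl _ _ _⟩
  obtain rfl | hlt := eq_or_lt_of_le (mem_Ici.1 ht)
  · exact (piecewise_eq_of_mem _ _ _ self_mem_Iic).trans hb
  · exact piecewise_eq_of_notMem _ _ _ (notMem_Iic.2 hlt)

lemma IsACOnN.append (h : IsACOnN σ a b) (h' : IsACOnN ρ b b') (hab : a ≤ b) (hbb' : b ≤ b')
    (hb : σ.f b = ρ.f b) : IsACOnN (σ.append ρ b) a b' := by
  obtain ⟨hl, hl'⟩ := ACIn.append_eqOn_left σ ρ b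
  obtain ⟨hr, hr'⟩ := ACIn.append_eqOn_right hb
  exact (h.congr (hl.symm.mono Icc_subset_Iic_self) (hl'.symm.mono Ioc_subset_Iic_self)).trans
    (h'.congr (hr.symm.mono Icc_subset_Ici_self) (hr'.symm.mono Ioc_subset_Ioi_self)) hab hbb'

lemma isACOnN_of_lipschitzWith {L : ℝ≥0} {f : ℝ → V d} (hf : LipschitzWith L f)
    (hN : ∀ t ∈ Icc a b, f t ∈ sphereCylinder d) : IsACOnN ⟨f, deriv f⟩ a b := by
  refine ⟨?_, fun t _ => ?_, hN⟩
  · have hint := (integral_deriv_eq_sub_of_lipschitzWith hf a b).1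
    rw [intervalIntegrable_iff'] at hint
    exact hint.mono_set Icc_subset_uIcc
  · rw [(integral_deriv_eq_sub_of_lipschitzWith hf a t).2, add_sub_cancel]

/-- A continuous field of symmetric forms on the cylinder whose norms are uniformly
equivalent to the ambient norm `‖·‖`, with constants `c` and `C`. -/
structure IsUniformMetric (g : V d → V d →L[ℝ] V d →L[ℝ] ℝ) (c : ℝ) (C : ℝ≥0) : Prop where
  continuousOn : ContinuousOn g (sphereCylinder d)
  symm : ∀ q ∈ sphereCylinder d, ∀ v w, g q v w = g q w v
  c_pos : 0 < c
  lower : ∀ q ∈ sphereCylinder d, ∀ v, c * ‖v‖ ≤ formNorm (g q) v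
  upper : ∀ q ∈ sphereCylinder d, ∀ v, formNorm (g q) v ≤ C * ‖v‖

namespace IsUniformMetric

lemma intervalIntegrable_speed (hg : IsUniformMetric g c C) (h : IsACOnN σ a b) {s t : ℝ}
    (hs : s ∈ Icc a b) (ht : t ∈ Icc a b) :
    IntervalIntegrable (fun t => formNorm (g (σ.f t)) (σ.f' t)) volume s t := by
  have hmeas : AEStronglyMeasurable (fun t => g (σ.f t)) (volume.restrict (Icc a b)) :=
    (hg.continuousOn.comp h.continuousOn fun _ => h.mem_sphereCylinder).aestronglyMeasurable
      measurableSet_Icc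
  refine IntegrableOn.intervalIntegrable (IntegrableOn.mono_set ?_ (uIcc_subset_Icc hs ht))
  refine Integrable.mono' (h.1.norm.const_mul C)
    (continuous_formNorm.comp_aestronglyMeasurable (hmeas.prodMk h.1.aestronglyMeasurable)) ?_
  filter_upwards [ae_restrict_mem measurableSet_Icc] with t ht
  exact (Real.norm_of_nonneg (Real.sqrt_nonneg _)).trans_le (hg.upper _ (h.mem_sphereCylinder ht) _)

lemma glen_add (hg : IsUniformMetric g c C) (h : IsACOnN σ a b) {r s t : ℝ} (hr : r ∈ Icc a b)
    (hs : s ∈ Icc a b) (ht : t ∈ Icc a b) : glen g σ r s + glen g σ s t = glen g σ r t :=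
  intervalIntegral.integral_add_adjacent_intervals (hg.intervalIntegrable_speed h hr hs)
    (hg.intervalIntegrable_speed h hs ht)

lemma glen_append (hg : IsUniformMetric g c C) (h : IsACOnN σ a b) (h' : IsACOnN ρ b b')
    (hab : a ≤ b) (hbb' : b ≤ b') (hb : σ.f b = ρ.f b) :
    glen g (σ.append ρ b) a b' = glen g σ a b + glen g ρ b b' := by
  obtain ⟨hl, hl'⟩ := ACIn.append_eqOn_left σ ρ b
  obtain ⟨hr, hr'⟩ := ACIn.append_eqOn_right hb
  rw [← hg.glen_add (h.append h' hab hbb' hb) (left_mem_Icc.2 (hab.trans hbb')) ⟨hab, hbb'⟩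
      (right_mem_Icc.2 (hab.trans hbb')),
    glen_congr hab (hl.mono Icc_subset_Iic_self) (hl'.mono Ioc_subset_Iic_self),
    glen_congr hbb' (hr.mono Icc_subset_Ici_self) (hr'.mono Ioc_subset_Ioi_self)]

lemma mul_norm_sub_le_glen (hg : IsUniformMetric g c C) (h : IsACOnN σ a b) (hab : a ≤ b) :
    c * ‖σ.f b - σ.f a‖ ≤ glen g σ a b := by
  have ha := left_mem_Icc.2 hab
  have hb := right_mem_Icc.2 hab
  calc c * ‖σ.f b - σ.f a‖ = c * ‖∫ u in a..b, σ.f' u‖ := by rw [h.integral_eq_sub ha hb]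
    _ ≤ c * ∫ u in a..b, ‖σ.f' u‖ := by
        gcongr
        · exact hg.c_pos.le
        · exact intervalIntegral.norm_integral_le_integral_norm hab
    _ = ∫ u in a..b, c * ‖σ.f' u‖ := (intervalIntegral.integral_const_mul _ _).symm
    _ ≤ glen g σ a b := intervalIntegral.integral_mono_on hab
        ((h.intervalIntegrable ha hb).norm.const_mul c) (hg.intervalIntegrable_speed h ha hb)
        fun u hu => hg.lower _ (h.mem_sphereCylinder hu) _

lemma glen_le_mul_sub (hg : IsUniformMetric g c C) (h : IsACOnN σ a b) (hab : a ≤ b)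
    (hK : ∀ᵐ t, t ∈ Icc a b → formNorm (g (σ.f t)) (σ.f' t) ≤ K) :
    glen g σ a b ≤ K * (b - a) := by
  have hmono : glen g σ a b ≤ ∫ _ in a..b, K :=
    intervalIntegral.integral_mono_ae_restrict hab
      (hg.intervalIntegrable_speed h (left_mem_Icc.2 hab) (right_mem_Icc.2 hab))
      intervalIntegrable_const ((ae_restrict_iff' measurableSet_Icc).2 hK)
  rwa [intervalIntegral.integral_const, smul_eq_mul, mul_comm] at hmono

end IsUniformMetric

end Curves

/-! ### The Riemannian distance -/

section Distance

open Metric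
open scoped ENNReal NNReal

variable {d : ℕ} {g : V d → V d →L[ℝ] V d →L[ℝ] ℝ} {σ ρ : ACIn d} {a b b' c : ℝ} {C : ℝ≥0}
  {p q r : V d}

/-- `σ` runs from `p` to `q` in the cylinder during the time interval `[a, b]`. -/
structure Joins (σ : ACIn d) (a b : ℝ) (p q : V d) : Prop where
  le : a ≤ b
  isACOnN : IsACOnN σ a b
  source : σ.f a = p
  target : σ.f b = q

/-- The Riemannian distance of `g` on the cylinder: the infimum of the lengths of the curves from
`p` to `q`. It is extended-valued, points which are not joined by any curve being at distance
`⊤`. -/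
def gEDist (g : V d → V d →L[ℝ] V d →L[ℝ] ℝ) (p q : V d) : ℝ≥0∞ :=
  ⨅ (σ : ACIn d) (a : ℝ) (b : ℝ) (_ : Joins σ a b p q), ENNReal.ofReal (glen g σ a b)

lemma Joins.gEDist_le (h : Joins σ a b p q) : gEDist g p q ≤ ENNReal.ofReal (glen g σ a b) :=
  iInf₂_le_of_le σ a (iInf₂_le b h)

lemma exists_joins_of_gEDist_lt {ℓ : ℝ≥0∞} (h : gEDist g p q < ℓ) :
    ∃ σ a b, Joins σ a b p q ∧ ENNReal.ofReal (glen g σ a b) < ℓ := by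
  simpa only [gEDist, iInf_lt_iff, exists_prop] using h

lemma Joins.reflect (h : Joins σ a b p q) (e : ℝ) :
    Joins (σ.reflect e) (e - b) (e - a) q p where
  le := sub_le_sub_left h.le e
  isACOnN := h.isACOnN.reflect e
  source := by simpa [ACIn.reflect] using h.target
  target := by simpa [ACIn.reflect] using h.source

lemma gEDist_comm (g : V d → V d →L[ℝ] V d →L[ℝ] ℝ) (p q : V d) :
    gEDist g p q = gEDist g q p := by
  suffices hle : ∀ p q, gEDist g p q ≤ gEDist g q p from le_antisymm (hle p q) (hle q p)
  refine fun p q => le_iInf₂ fun σ a => le_iInf₂ fun b h => ?_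
  rw [← glen_reflect σ a b 0]
  exact (h.reflect 0).gEDist_le

/-- Two reflections translate the time interval of a curve. -/
lemma Joins.exists_translate (h : Joins σ a b p q) (a' : ℝ) :
    ∃ ρ b', Joins ρ a' b' p q ∧ ∀ g, glen g ρ a' b' = glen g σ a b := by
  refine ⟨(σ.reflect 0).reflect (a' - a), a' - a - (0 - b), ?_, fun g => ?_⟩
  · simpa using (h.reflect 0).reflect (a' - a)
  · rw [← glen_reflect σ a b 0, ← glen_reflect (σ.reflect 0) (0 - b) (0 - a) (a' - a)]
    simp

lemma Joins.append (h : Joins σ a b p q) (h' : Joins ρ b b' q r) :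
    Joins (σ.append ρ b) a b' p r where
  le := h.le.trans h'.le
  isACOnN := h.isACOnN.append h'.isACOnN h.le h'.le (h.target.trans h'.source.symm)
  source := ((σ.append_eqOn_left ρ b).1 h.le).trans h.source
  target := ((ACIn.append_eqOn_right (h.target.trans h'.source.symm)).1 h'.le).trans h'.target

/-- Points of the cylinder, with the Riemannian distance of `g`. The proof that `g` is uniform is a
parameter because the metric space instance depends on it. -/
@[ext]
structure RiemannianCylinder (_hg : IsUniformMetric g c C) where
  point : V d
  mem_sphereCylinder : point ∈ sphereCylinder d

namespace IsUniformMetric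

lemma gEDist_triangle (hg : IsUniformMetric g c C) (p q r : V d) :
    gEDist g p r ≤ gEDist g p q + gEDist g q r := by
  conv_rhs => simp only [gEDist, ENNReal.iInf_add, ENNReal.add_iInf]
  refine le_iInf₂ fun ρ a' => le_iInf₂ fun b' h' => le_iInf₂ fun σ a => le_iInf₂ fun b h => ?_
  obtain ⟨ρ', e, hρ', hlen⟩ := h'.exists_translate b
  rw [← hlen g, ← ENNReal.ofReal_add (glen_nonneg h.le) (glen_nonneg hρ'.le),
    ← hg.glen_append h.isACOnN hρ'.isACOnN h.le hρ'.le (h.target.trans hρ'.source.symm)]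
  exact (h.append hρ').gEDist_le

lemma ofReal_mul_norm_sub_le_gEDist (hg : IsUniformMetric g c C) (p q : V d) :
    ENNReal.ofReal (c * ‖q - p‖) ≤ gEDist g p q := by
  refine le_iInf₂ fun σ a => le_iInf₂ fun b h => ENNReal.ofReal_le_ofReal ?_
  rw [← h.source, ← h.target]
  exact hg.mul_norm_sub_le_glen h.isACOnN h.le

lemma gEDist_le_of_lipschitzOnWith (hg : IsUniformMetric g c C) {L : ℝ≥0} {f : ℝ → V d}
    (hab : a ≤ b) (hf : LipschitzOnWith L f (Icc a b))
    (hN : ∀ t ∈ Icc a b, f t ∈ sphereCylinder d) :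
    gEDist g (f a) (f b) ≤ ENNReal.ofReal (C * L * (b - a)) := by
  set F : ℝ → V d := fun t => f (projIcc a b hab t)
  have hF : LipschitzWith L F :=
    mul_one L ▸ (lipschitzOnWith_iff_restrict.1 hf).comp (LipschitzWith.projIcc hab)
  have hac : IsACOnN ⟨F, deriv F⟩ a b :=
    isACOnN_of_lipschitzWith hF fun t _ => hN _ (projIcc ..).2
  have hjoin : Joins ⟨F, deriv F⟩ a b (f a) (f b) := ⟨hab, hac, by simp [F], by simp [F]⟩
  refine hjoin.gEDist_le.trans (ENNReal.ofReal_le_ofReal (hg.glen_le_mul_sub hac hab ?_))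
  refine Eventually.of_forall fun t ht => (hg.upper _ (hac.mem_sphereCylinder ht) _).trans ?_
  gcongr
  exact norm_deriv_le_of_lipschitz hF

lemma gEDist_self (hg : IsUniformMetric g c C) (hp : p ∈ sphereCylinder d) : gEDist g p p = 0 := by
  simpa using hg.gEDist_le_of_lipschitzOnWith le_rfl
    (LipschitzWith.const p).lipschitzOnWith fun t (_ : t ∈ Icc (0 : ℝ) 0) => hp

lemma gEDist_le_edist_glen (hg : IsUniformMetric g c C) (h : IsACOnN σ a b) {s t : ℝ}
    (hs : s ∈ Icc a b) (ht : t ∈ Icc a b) :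
    gEDist g (σ.f s) (σ.f t) ≤ edist (glen g σ a s) (glen g σ a t) := by
  wlog hst : s ≤ t generalizing s t
  · rw [gEDist_comm, edist_comm]
    exact this ht hs (le_of_not_ge hst)
  rw [edist_comm, edist_dist, Real.dist_eq,
    ← hg.glen_add h (left_mem_Icc.2 (hs.1.trans hs.2)) hs ht, add_sub_cancel_left,
    abs_of_nonneg (glen_nonneg hst)]
  exact Joins.gEDist_le ⟨hst, h.mono hs.1 ht.2, rfl, rfl⟩

instance (hg : IsUniformMetric g c C) : EMetricSpace (RiemannianCylinder hg) where
  edist p q := gEDist g p.point q.point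
  edist_self p := hg.gEDist_self p.mem_sphereCylinder
  edist_comm p q := gEDist_comm g p.point q.point
  edist_triangle p q r := hg.gEDist_triangle p.point q.point r.point
  eq_of_edist_eq_zero {p q} h := by
    have hle := ENNReal.ofReal_eq_zero.1
      (le_zero_iff.1 ((hg.ofReal_mul_norm_sub_le_gEDist p.point q.point).trans_eq h))
    have hnorm := nonpos_of_mul_nonpos_right hle hg.c_pos
    exact RiemannianCylinder.ext (sub_eq_zero.1 (norm_le_zero_iff.1 hnorm)).symm

lemma edist_def (hg : IsUniformMetric g c C) (p q : RiemannianCylinder hg) :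
    edist p q = gEDist g p.point q.point := rfl

lemma continuousOn_glen (hg : IsUniformMetric g c C) (h : IsACOnN σ a b) (hab : a ≤ b) :
    ContinuousOn (glen g σ a) (Icc a b) := by
  have hint := hg.intervalIntegrable_speed h (left_mem_Icc.2 hab) (right_mem_Icc.2 hab)
  rw [intervalIntegrable_iff'] at hint
  rw [← uIcc_of_le hab]
  exact intervalIntegral.continuousOn_primitive_interval hint

/-- A curve from `p` to `q` of length `L ≤ ℓ` is parametrized by its accumulated length, and stays
at `q` from time `L` on. -/
theorem isLengthSpace (hg : IsUniformMetric g c C) : IsLengthSpace (RiemannianCylinder hg) := by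
  intro p q ℓ hpq
  obtain ⟨σ, a, b, h, hlen⟩ := exists_joins_of_gEDist_lt hpq
  have hℓ : glen g σ a b ≤ ℓ := ((ENNReal.ofReal_lt_coe_iff (glen_nonneg h.le)).1 hlen).le
  have hL : 0 ≤ glen g σ a b := glen_nonneg h.le
  have hsurj : Icc 0 (glen g σ a b) ⊆ glen g σ a '' Icc a b := by
    simpa [glen] using intermediate_value_Icc h.le (hg.continuousOn_glen h.isACOnN h.le)
  choose T hT hTlen using fun u : ℝ => hsurj (projIcc 0 (glen g σ a b) hL u).2
  have hdist : ∀ u, ∀ t ∈ Icc a b, gEDist g (σ.f (T u)) (σ.f t)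
      ≤ edist (projIcc 0 (glen g σ a b) hL u : ℝ) (glen g σ a t) := fun u t ht =>
    hTlen u ▸ hg.gEDist_le_edist_glen h.isACOnN (hT u) ht
  let f : ℝ → RiemannianCylinder hg := fun u => ⟨σ.f (T u), h.isACOnN.mem_sphereCylinder (hT u)⟩
  refine ⟨f, fun u v => ?_, edist_le_zero.1 ?_, edist_le_zero.1 ?_⟩
  · refine (hdist u (T v) (hT v)).trans ?_
    rw [hTlen]
    exact LipschitzWith.projIcc hL u v
  · have h0 := hdist 0 a (left_mem_Icc.2 h.le)
    rw [projIcc_left, h.source, show glen g σ a a = 0 from intervalIntegral.integral_same,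
      edist_self] at h0
    exact h0
  · have h1 := hdist ℓ b (right_mem_Icc.2 h.le)
    rw [projIcc_of_right_le _ hℓ, h.target, edist_self] at h1
    exact h1

end IsUniformMetric

end Distance

/-! ### The topology of the Riemannian distance -/

section Topology

open Metric
open scoped ENNReal NNReal Topology

variable {d : ℕ} {g : V d → V d →L[ℝ] V d →L[ℝ] ℝ} {c : ℝ} {C : ℝ≥0} {p q : V d}

/-- The radial retraction onto the cylinder of the complement of the axis `{q | q.2 = 0}`. -/
def toSphereCylinder (q : V d) : V d := (q.1, ‖q.2‖⁻¹ • q.2)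

lemma toSphereCylinder_mem (hq : q.2 ≠ 0) : toSphereCylinder q ∈ sphereCylinder d := by
  simp [sphereCylinder, toSphereCylinder, norm_smul, hq]

lemma toSphereCylinder_of_mem (hq : q ∈ sphereCylinder d) : toSphereCylinder q = q := by
  simp [toSphereCylinder, show ‖q.2‖ = 1 from hq]

lemma ne_zero_of_mem_sphereCylinder (hq : q ∈ sphereCylinder d) : q.2 ≠ 0 :=
  norm_ne_zero_iff.1 ((show ‖q.2‖ = 1 from hq).trans_ne one_ne_zero)

lemma exists_lipschitzOnWith_toSphereCylinder (hp : p ∈ sphereCylinder d) :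
    ∃ (L : ℝ≥0) (ε : ℝ), 0 < ε ∧ LipschitzOnWith L toSphereCylinder (ball p ε) ∧
      MapsTo toSphereCylinder (ball p ε) (sphereCylinder d) := by
  have hp2 := ne_zero_of_mem_sphereCylinder hp
  have hsmooth : ContDiffAt ℝ 1 toSphereCylinder p :=
    contDiffAt_fst.prodMk (((contDiffAt_snd.norm ℝ hp2).inv (norm_ne_zero_iff.2 hp2)).smul
      contDiffAt_snd)
  obtain ⟨L, s, hs, hL⟩ := hsmooth.exists_lipschitzOnWith
  obtain ⟨ε, hε, hball⟩ := Metric.mem_nhds_iff.1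
    (inter_mem hs (continuous_snd.continuousAt.eventually_ne hp2))
  exact ⟨L, ε, hε, hL.mono fun q hq => (hball hq).1, fun q hq => toSphereCylinder_mem (hball hq).2⟩

namespace IsUniformMetric

/-- Nearby points are joined by the radial projection of a straight segment. -/
lemma tendsto_gEDist (hg : IsUniformMetric g c C) (hp : p ∈ sphereCylinder d) :
    Tendsto (fun q => gEDist g q p) (𝓝[sphereCylinder d] p) (𝓝 0) := by
  obtain ⟨L, ε, hε, hL, hmaps⟩ := exists_lipschitzOnWith_toSphereCylinder hp
  have hbound : ∀ᶠ q in 𝓝[sphereCylinder d] p,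
      gEDist g q p ≤ ENNReal.ofReal (C * (L * dist q p)) := by
    filter_upwards [self_mem_nhdsWithin, mem_nhdsWithin_of_mem_nhds (ball_mem_nhds p hε)]
      with q hqN hq
    have hseg : MapsTo (AffineMap.lineMap (k := ℝ) q p) (Icc (0 : ℝ) 1) (ball p ε) :=
      fun t ht => (convex_ball p ε).lineMap_mem hq (mem_ball_self hε) ht
    have hle := hg.gEDist_le_of_lipschitzOnWith zero_le_one
      (hL.comp (lipschitzWith_lineMap q p).lipschitzOnWith hseg) (hmaps.comp hseg)
    simpa [toSphereCylinder_of_mem, hqN, hp] using hle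
  have hlim : Tendsto (fun q => ENNReal.ofReal (C * (L * dist q p))) (𝓝 p) (𝓝 0) := by
    have hcont : Continuous fun q => ENNReal.ofReal (C * (L * dist q p)) :=
      ENNReal.continuous_ofReal.comp (by fun_prop)
    simpa using hcont.tendsto p
  exact tendsto_of_tendsto_of_tendsto_of_le_of_le' tendsto_const_nhds
    (hlim.mono_left nhdsWithin_le_nhds) (Eventually.of_forall fun _ => zero_le) hbound

lemma continuous_mk (hg : IsUniformMetric g c C) :
    Continuous fun q : sphereCylinder d => (⟨q, q.2⟩ : RiemannianCylinder hg) := by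
  refine continuous_iff_continuousAt.2 fun p => tendsto_iff_edist_tendsto_0.2 ?_
  exact (tendsto_nhdsWithin_iff_subtype p.2 _ _).1 (hg.tendsto_gEDist p.2)

lemma isCompact_setOf_fst_mem_Icc (hg : IsUniformMetric g c C) (a b : ℝ) :
    IsCompact {p : RiemannianCylinder hg | p.point.1 ∈ Icc a b} := by
  have hcyl : IsCompact {q : sphereCylinder d | q.1.1 ∈ Icc a b} := by
    rw [Subtype.isCompact_iff]
    convert isCompact_Icc.prod (isCompact_sphere (0 : EuclideanSpace ℝ (Fin (d + 1))) 1)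
      (s := Icc a b) using 1
    ext q
    exact ⟨fun ⟨x, hx, hxq⟩ => hxq ▸ ⟨hx, mem_sphere_zero_iff_norm.2 x.2⟩,
      fun hq => ⟨⟨q, mem_sphere_zero_iff_norm.1 hq.2⟩, hq.1, rfl⟩⟩
  convert hcyl.image hg.continuous_mk using 1
  ext p
  exact ⟨fun hp => ⟨⟨p.point, p.mem_sphereCylinder⟩, hp, rfl⟩, fun ⟨_, hq, hqp⟩ => hqp ▸ hq⟩

lemma abs_fst_sub_lt_of_edist_lt (hg : IsUniformMetric g c C) {p q : RiemannianCylinder hg}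
    {r : ℝ} (h : edist p q < ENNReal.ofReal r) : |q.point.1 - p.point.1| < r / c := by
  have hlt := (hg.ofReal_mul_norm_sub_le_gEDist p.point q.point).trans_lt h
  have hnorm := (ENNReal.ofReal_lt_ofReal_iff_of_nonneg
    (mul_nonneg hg.c_pos.le (norm_nonneg _))).1 hlt
  exact (norm_fst_le (q.point - p.point)).trans_lt ((lt_div_iff₀' hg.c_pos).2 hnorm)

lemma isCompact_cthickening (hg : IsUniformMetric g c C) (a b r : ℝ) :
    IsCompact (cthickening r {p : RiemannianCylinder hg | p.point.1 ∈ Icc a b}) := by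
  obtain ⟨r', hr', hrr'⟩ : ∃ r', 0 < r' ∧ r < r' :=
    ⟨max 0 r + 1, by positivity, by linarith [le_max_right 0 r]⟩
  refine (hg.isCompact_setOf_fst_mem_Icc (a - r' / c) (b + r' / c)).of_isClosed_subset
    isClosed_cthickening fun p hp => ?_
  obtain ⟨q, hq, hpq⟩ := (mem_thickening_iff_exists_edist_lt _ _).1
    (cthickening_subset_thickening' hr' hrr' _ hp)
  have hdist := abs_sub_lt_iff.1 (hg.abs_fst_sub_lt_of_edist_lt hpq)
  exact ⟨by linarith [hq.1], by linarith [hq.2]⟩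

lemma exists_le_edist (hg : IsUniformMetric g c C) (r : ℝ≥0) :
    ∃ p q : RiemannianCylinder hg, r ≤ edist p q ∧ edist p q ≠ ⊤ := by
  obtain ⟨e, he⟩ := exists_norm_eq (EuclideanSpace ℝ (Fin (d + 1))) zero_le_one
  have hx : 0 ≤ r / c := div_nonneg r.2 hg.c_pos.le
  set line : ℝ → V d := fun t => (t, e) with hline_def
  have hline : LipschitzWith (max 1 0) line := LipschitzWith.id.prodMk (LipschitzWith.const e)
  have hnorm : c * ‖line (r / c) - line 0‖ = r := by
    simp [hline_def, Prod.norm_mk, abs_of_pos hg.c_pos, max_eq_left hx,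
      mul_div_cancel₀ _ hg.c_pos.ne']
  have hlower := hg.ofReal_mul_norm_sub_le_gEDist (line 0) (line (r / c))
  have hupper := hg.gEDist_le_of_lipschitzOnWith hx hline.lipschitzOnWith fun _ _ => he
  rw [hnorm, ENNReal.ofReal_coe_nnreal] at hlower
  refine ⟨⟨line 0, he⟩, ⟨line (r / c), he⟩, ?_⟩
  rw [edist_def]
  exact ⟨hlower, ne_top_of_le_ne_top ENNReal.ofReal_ne_top hupper⟩

end IsUniformMetric

end Topology

/-! ### Invariance under the deck transformations -/

section Invariance

open Metric
open scoped ENNReal NNReal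

variable {d : ℕ} {g : V d → V d →L[ℝ] V d →L[ℝ] ℝ} {σ : ACIn d} {a b c : ℝ} {C : ℝ≥0} {q : V d}
  {φ : V d ≃ᵃⁱ[ℝ] V d}

/-- The affine isometries of the ambient space which preserve the cylinder and, on it, the metric
`g`. -/
def affineIsometries (g : V d → V d →L[ℝ] V d →L[ℝ] ℝ) : Subgroup (V d ≃ᵃⁱ[ℝ] V d) where
  carrier := {φ | (∀ q, φ q ∈ sphereCylinder d ↔ q ∈ sphereCylinder d) ∧
    ∀ q ∈ sphereCylinder d, ∀ v w,
      g (φ q) (φ.linearIsometryEquiv v) (φ.linearIsometryEquiv w) = g q v w}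
  one_mem' := ⟨fun _ => Iff.rfl, fun _ _ _ _ => rfl⟩
  mul_mem' {φ ψ} hφ hψ := ⟨fun q => (hφ.1 (ψ q)).trans (hψ.1 q), fun q hq v w =>
    (hφ.2 (ψ q) ((hψ.1 q).2 hq) _ _).trans (hψ.2 q hq v w)⟩
  inv_mem' {φ} hφ := by
    have hmem : ∀ q, φ⁻¹ q ∈ sphereCylinder d ↔ q ∈ sphereCylinder d := fun q => by
      simpa using (hφ.1 (φ⁻¹ q)).symm
    refine ⟨hmem, fun q hq v w => ?_⟩
    have h := hφ.2 (φ⁻¹ q) ((hmem q).2 hq) (φ⁻¹.linearIsometryEquiv v)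
      (φ⁻¹.linearIsometryEquiv w)
    rw [show φ (φ⁻¹ q) = q from φ.apply_symm_apply q] at h
    exact h.symm.trans (congrArg₂ (fun v w => g q v w)
      (φ.linearIsometryEquiv.apply_symm_apply v) (φ.linearIsometryEquiv.apply_symm_apply w))

lemma formNorm_map (hφ : φ ∈ affineIsometries g) (hq : q ∈ sphereCylinder d) (v : V d) :
    formNorm (g (φ q)) (φ.linearIsometryEquiv v) = formNorm (g q) v :=
  congrArg Real.sqrt (hφ.2 q hq v v)

/-- The image of a curve under an affine isometry. -/
def ACIn.map (σ : ACIn d) (φ : V d ≃ᵃⁱ[ℝ] V d) : ACIn d :=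
  ⟨fun t => φ (σ.f t), fun t => φ.linearIsometryEquiv (σ.f' t)⟩

lemma IsACOnN.map (h : IsACOnN σ a b) (hφ : φ ∈ affineIsometries g) :
    IsACOnN (σ.map φ) a b := by
  set A : V d →L[ℝ] V d := φ.linearIsometryEquiv.toContinuousLinearEquiv.toContinuousLinearMap
  refine ⟨A.integrable_comp h.1, fun t ht => ?_, fun t ht => (hφ.1 _).2 (h.2.2 t ht)⟩
  have ha : a ∈ Icc a b := left_mem_Icc.2 (ht.1.trans ht.2)
  have hint : ∫ s in a..t, A (σ.f' s) = A (σ.f t - σ.f a) := by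
    rw [A.intervalIntegral_comp_comm (h.intervalIntegrable ha ht), h.integral_eq_sub ha ht]
  have hsub : A (σ.f t - σ.f a) = φ (σ.f t) - φ (σ.f a) := φ.map_vsub _ _
  exact (eq_add_of_sub_eq' (hsub.symm.trans hint.symm) :)

lemma glen_map (h : IsACOnN σ a b) (hab : a ≤ b) (hφ : φ ∈ affineIsometries g) :
    glen g (σ.map φ) a b = glen g σ a b := by
  refine intervalIntegral.integral_congr fun t ht => ?_
  rw [uIcc_of_le hab] at ht
  exact formNorm_map hφ (h.mem_sphereCylinder ht) _

lemma gEDist_map (hφ : φ ∈ affineIsometries g) (p q : V d) :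
    gEDist g (φ p) (φ q) = gEDist g p q := by
  have hle : ∀ ψ ∈ affineIsometries g, ∀ p q, gEDist g (ψ p) (ψ q) ≤ gEDist g p q :=
    fun ψ hψ p q => le_iInf₂ fun σ a => le_iInf₂ fun b h => by
      rw [← glen_map h.isACOnN h.le hψ]
      exact Joins.gEDist_le
        ⟨h.le, h.isACOnN.map hψ, congrArg ψ h.source, congrArg ψ h.target⟩
  exact le_antisymm (hle φ hφ p q) (by simpa using hle φ⁻¹ (inv_mem hφ) (φ p) (φ q))

lemma exists_isometry_of_mem_affineIsometries (hg : IsUniformMetric g c C)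
    (hφ : φ ∈ affineIsometries g) : ∃ ψ : RiemannianCylinder hg → RiemannianCylinder hg,
      Isometry ψ ∧ ∀ p, (ψ p).point = φ p.point :=
  ⟨fun p => ⟨φ p.point, (hφ.1 _).2 p.mem_sphereCylinder⟩, fun _ _ => gEDist_map hφ _ _,
    fun _ => rfl⟩

/-- The transformation `τ(x, p) = (x + 1, R p)`. -/
def deckTransformation
    (R : EuclideanSpace ℝ (Fin (d + 1)) ≃ₗᵢ[ℝ] EuclideanSpace ℝ (Fin (d + 1))) :
    V d ≃ᵃⁱ[ℝ] V d :=
  AffineIsometryEquiv.mk' (fun q => (q.1 + 1, R q.2))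
    { (LinearEquiv.refl ℝ ℝ).prodCongr R.toLinearEquiv with
      norm_map' := fun v => by simp [Prod.norm_def] } 0 fun q => by ext <;> simp

variable {R : EuclideanSpace ℝ (Fin (d + 1)) ≃ₗᵢ[ℝ] EuclideanSpace ℝ (Fin (d + 1))}

lemma deckTransformation_mem_affineIsometries (hinv : ∀ q ∈ sphereCylinder d, ∀ v w,
      g (q.1 + 1, R q.2) (v.1, R v.2) (w.1, R w.2) = g q v w) :
    deckTransformation R ∈ affineIsometries g :=
  ⟨fun q => by simp [sphereCylinder, deckTransformation], hinv⟩

lemma deckTransformation_zpow_apply_fst (n : ℤ) (q : V d) :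
    ((deckTransformation R ^ n) q).1 = q.1 + n := by
  have hτ : ∀ q, (deckTransformation R q).1 = q.1 + 1 := fun _ => rfl
  have hinv : ∀ q, ((deckTransformation R)⁻¹ q).1 = q.1 - 1 := fun q => by
    rw [eq_sub_iff_add_eq, ← hτ]
    exact congrArg Prod.fst ((deckTransformation R).apply_symm_apply q)
  induction n generalizing q with
  | zero => simp
  | succ n ih =>
    rw [zpow_add_one, AffineIsometryEquiv.coe_mul, Function.comp_apply, ih, hτ]
    push_cast
    ring
  | pred n ih =>
    rw [zpow_sub_one, AffineIsometryEquiv.coe_mul, Function.comp_apply, ih, hinv]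
    push_cast
    ring

lemma exists_mem_affineIsometries_fst_mem_Icc (hτ : deckTransformation R ∈ affineIsometries g)
    (q : V d) : ∃ φ ∈ affineIsometries g, (φ q).1 ∈ Icc (0 : ℝ) 1 := by
  refine ⟨deckTransformation R ^ (-⌊q.1⌋), zpow_mem hτ _, ?_⟩
  rw [deckTransformation_zpow_apply_fst, Int.cast_neg, ← sub_eq_add_neg, Int.self_sub_floor]
  exact ⟨Int.fract_nonneg _, (Int.fract_lt_one _).le⟩

lemma exists_isUniformMetric (hcont : ContinuousOn g (sphereCylinder d))
    (hsymm : ∀ q ∈ sphereCylinder d, ∀ v w, g q v w = g q w v)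
    (hpos : ∀ q ∈ sphereCylinder d, ∀ v ≠ 0, 0 < g q v v)
    (hmove : ∀ q, ∃ φ ∈ affineIsometries g, (φ q).1 ∈ Icc (0 : ℝ) 1) :
    ∃ c C, IsUniformMetric g c C := by
  have hF : IsCompact (Icc (0 : ℝ) 1 ×ˢ sphere (0 : EuclideanSpace ℝ (Fin (d + 1))) 1) :=
    isCompact_Icc.prod (isCompact_sphere _ _)
  have hFN : Icc (0 : ℝ) 1 ×ˢ sphere 0 1 ⊆ sphereCylinder d := fun q hq =>
    mem_sphere_zero_iff_norm.1 hq.2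
  obtain ⟨c, C, hc, hbounds⟩ := exists_norm_bounds_formNorm hF (hcont.mono hFN)
    fun q hq => hpos q (hFN hq)
  have hall : ∀ q ∈ sphereCylinder d, ∀ v,
      c * ‖v‖ ≤ formNorm (g q) v ∧ formNorm (g q) v ≤ C * ‖v‖ := by
    intro q hq v
    obtain ⟨φ, hφ, hφq⟩ := hmove q
    have hφN : φ q ∈ sphereCylinder d := (hφ.1 q).2 hq
    simpa only [formNorm_map hφ hq, LinearIsometryEquiv.norm_map] using
      hbounds (φ q) ⟨hφq, mem_sphere_zero_iff_norm.2 hφN⟩ (φ.linearIsometryEquiv v)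
  exact ⟨c, C.toNNReal, hcont, hsymm, hc, fun q hq v => (hall q hq v).1, fun q hq v =>
    (hall q hq v).2.trans (by gcongr; exact C.le_coe_toNNReal)⟩

theorem IsUniformMetric.exists_isometry_real (hg : IsUniformMetric g c C)
    (hmove : ∀ q, ∃ φ ∈ affineIsometries g, (φ q).1 ∈ Icc (0 : ℝ) 1) :
    ∃ γ : ℝ → RiemannianCylinder hg, Isometry γ := by
  refine hg.isLengthSpace.exists_isometry_real (hg.isCompact_cthickening 0 1) (fun p => ?_)
    hg.exists_le_edist
  obtain ⟨φ, hφ, hφp⟩ := hmove p.point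
  obtain ⟨ψ, hψ, hψφ⟩ := exists_isometry_of_mem_affineIsometries hg hφ
  exact ⟨ψ, hψ, by rwa [mem_ofPred_eq, hψφ]⟩

end Invariance

/-! ### Isometric lines are class-A minimizers -/

section ClassA

open Metric
open scoped ENNReal NNReal Topology

variable {d : ℕ} {g : V d → V d →L[ℝ] V d →L[ℝ] ℝ} {σ : ACIn d} {a b c k : ℝ} {C : ℝ≥0} {p : V d}

namespace IsUniformMetric

lemma mul_formNorm_sub_le_glen (hg : IsUniformMetric g c C) (hp : p ∈ sphereCylinder d)
    (hk0 : 0 ≤ k) (hk1 : k ≤ 1) (h : IsACOnN σ a b) (hab : a ≤ b)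
    (hclose : ∀ t ∈ Icc a b, ‖g (σ.f t) - g p‖ ≤ (1 - k ^ 2) * c ^ 2) :
    k * formNorm (g p) (σ.f b - σ.f a) ≤ glen g σ a b := by
  have ha := left_mem_Icc.2 hab
  have hb := right_mem_Icc.2 hab
  have hint := h.intervalIntegrable ha hb
  have hspeed : IntervalIntegrable (fun t => formNorm (g p) (σ.f' t)) volume a b := by
    refine (hint.norm.const_mul C).mono_fun' (continuous_formNorm.comp_aestronglyMeasurable
      (aestronglyMeasurable_const.prodMk hint.def'.aestronglyMeasurable))
      (Eventually.of_forall fun t => ?_)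
    exact (Real.norm_of_nonneg (Real.sqrt_nonneg _)).trans_le (hg.upper p hp _)
  calc k * formNorm (g p) (σ.f b - σ.f a) = k * formNorm (g p) (∫ t in a..b, σ.f' t) := by
        rw [h.integral_eq_sub ha hb]
    _ ≤ k * ∫ t in a..b, formNorm (g p) (σ.f' t) := by
        gcongr
        exact formNorm_integral_le (hg.symm p hp)
          (fun v => nonneg_of_mul_norm_le_formNorm hg.c_pos (hg.lower p hp v)) hab hint hspeed
    _ = ∫ t in a..b, k * formNorm (g p) (σ.f' t) := (intervalIntegral.integral_const_mul _ _).symm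
    _ ≤ glen g σ a b := intervalIntegral.integral_mono_on hab (hspeed.const_mul k)
        (hg.intervalIntegrable_speed h ha hb) fun t ht =>
          mul_formNorm_le_of_norm_sub_le hg.c_pos hk0 hk1 (hg.lower p hp _) (hclose t ht)

/-- A curve of length less than `c * ε` stays in the ball of radius `ε` around its origin `p`, where
`g` is close to `g p`. -/
lemma eventually_mul_formNorm_sub_le_edist (hg : IsUniformMetric g c C)
    (p : RiemannianCylinder hg) (hk0 : 0 ≤ k) (hk1 : k < 1) : ∀ᶠ q in 𝓝 p,
      ENNReal.ofReal (k * formNorm (g p.point) (q.point - p.point)) ≤ edist p q := by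
  have hc := hg.c_pos
  have hη : 0 < (1 - k ^ 2) * c ^ 2 := mul_pos (by nlinarith) (by positivity)
  have hnhds : ball (g p.point) ((1 - k ^ 2) * c ^ 2) ∈ 𝓝 (g p.point) :=
    ball_mem_nhds (g p.point) hη
  obtain ⟨ε, hε, hball⟩ :=
    mem_nhdsWithin_iff.1 (hg.continuousOn p.point p.mem_sphereCylinder hnhds)
  filter_upwards [eball_mem_nhds p (ENNReal.ofReal_pos.2 (mul_pos hc hε))] with q hq
  by_contra! hlt
  obtain ⟨σ, a, b, h, hlen⟩ := exists_joins_of_gEDist_lt (lt_min hlt (mem_eball'.1 hq))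
  refine (lt_min_iff.1 hlen).1.not_ge (ENNReal.ofReal_le_ofReal ?_)
  have hshort : glen g σ a b < c * ε :=
    (ENNReal.ofReal_lt_ofReal_iff_of_nonneg (glen_nonneg h.le)).1 (lt_min_iff.1 hlen).2
  rw [← h.target, ← h.source]
  refine hg.mul_formNorm_sub_le_glen (h.source ▸ p.mem_sphereCylinder) hk0 hk1.le h.isACOnN h.le
    fun t ht => ?_
  have hdist : c * ‖σ.f t - σ.f a‖ < c * ε :=
    calc c * ‖σ.f t - σ.f a‖ ≤ glen g σ a t :=
          hg.mul_norm_sub_le_glen (h.isACOnN.mono le_rfl ht.2) ht.1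
      _ ≤ glen g σ a t + glen g σ t b := le_add_of_nonneg_right (glen_nonneg ht.2)
      _ = glen g σ a b := hg.glen_add h.isACOnN (left_mem_Icc.2 h.le) ht (right_mem_Icc.2 h.le)
      _ < c * ε := hshort
  rw [h.source] at hdist ⊢
  have hmem := mem_ball_iff_norm.2 (lt_of_mul_lt_mul_left hdist hc.le)
  have hclose : g (σ.f t) ∈ ball (g p.point) ((1 - k ^ 2) * c ^ 2) :=
    hball ⟨hmem, h.isACOnN.mem_sphereCylinder ht⟩
  exact (dist_eq_norm (g (σ.f t)) (g p.point)) ▸ (mem_ball.1 hclose).le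

lemma formNorm_le_of_hasDerivAt (hg : IsUniformMetric g c C) {γ : ℝ → RiemannianCylinder hg}
    {K : ℝ≥0} (hγ : LipschitzWith K γ) {t : ℝ} {v : V d}
    (hv : HasDerivAt (fun s => (γ s).point) v t) : formNorm (g (γ t).point) v ≤ K := by
  have hk : ∀ᶠ k in 𝓝[<] (1 : ℝ), k * formNorm (g (γ t).point) v ≤ K := by
    filter_upwards [Ico_mem_nhdsLT zero_lt_one] with k hk
    have hlim := ((continuous_formNorm.comp (Continuous.prodMk_right (g (γ t).point))).tendsto
      v).comp (hasDerivAt_iff_tendsto_slope.1 hv)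
    refine le_of_tendsto (hlim.const_mul k) ?_
    filter_upwards [self_mem_nhdsWithin, nhdsWithin_le_nhds (hγ.continuous.continuousAt.eventually
      (hg.eventually_mul_formNorm_sub_le_edist (γ t) hk.1 hk.2))] with s hst hs
    have hpos : 0 < |s - t| := abs_pos.2 (sub_ne_zero.2 hst)
    have hle : k * formNorm (g (γ t).point) ((γ s).point - (γ t).point) ≤ K * |s - t| := by
      have h := hs.trans (hγ t s)
      rw [edist_comm, edist_dist, Real.dist_eq, ← ENNReal.ofReal_coe_nnreal,
        ← ENNReal.ofReal_mul K.coe_nonneg] at h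
      exact (ENNReal.ofReal_le_ofReal_iff (by positivity)).1 h
    simp only [Function.comp_apply, slope_def_module, formNorm_smul, abs_inv]
    rw [mul_left_comm, inv_mul_le_iff₀ hpos, mul_comm |s - t|]
    exact hle
  have hlim : Tendsto (fun k => k * formNorm (g (γ t).point) v) (𝓝[<] 1)
      (𝓝 (1 * formNorm (g (γ t).point) v)) :=
    (continuous_mul_const _).continuousAt.mono_left nhdsWithin_le_nhds
  simpa using le_of_tendsto hlim hk

lemma lipschitzWith_point (hg : IsUniformMetric g c C) :
    LipschitzWith (c⁻¹).toNNReal (RiemannianCylinder.point : RiemannianCylinder hg → V d) := by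
  intro p q
  have hle := hg.ofReal_mul_norm_sub_le_gEDist q.point p.point
  rw [ENNReal.ofReal_mul hg.c_pos.le, ← dist_eq_norm, ← edist_dist, ← edist_def,
    edist_comm q] at hle
  rw [← ENNReal.ofReal, ENNReal.ofReal_inv_of_pos hg.c_pos, mul_comm, ← div_eq_mul_inv,
    ENNReal.le_div_iff_mul_le (Or.inl (ENNReal.ofReal_pos.2 hg.c_pos).ne')
      (Or.inl ENNReal.ofReal_ne_top), mul_comm]
  exact hle

theorem isClassA_of_isometry (hg : IsUniformMetric g c C) {γ : ℝ → RiemannianCylinder hg}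
    (hγ : Isometry γ) : ∃ ρ : ACIn d, (∀ t, ρ.f t = (γ t).point) ∧ (∀ a b, IsACOnN ρ a b) ∧
      ∀ a b, a ≤ b → ∀ σ, Joins σ a b (ρ.f a) (ρ.f b) → glen g ρ a b ≤ glen g σ a b := by
  have hlip := hg.lipschitzWith_point.comp hγ.lipschitz
  have hac : ∀ a b, IsACOnN ⟨fun t => (γ t).point, deriv fun t => (γ t).point⟩ a b := fun a b =>
    isACOnN_of_lipschitzWith hlip fun t _ => (γ t).mem_sphereCylinder
  refine ⟨_, fun _ => rfl, hac, fun a b hab σ hσ => ?_⟩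
  have hspeed : ∀ᵐ t, t ∈ Icc a b →
      formNorm (g (γ t).point) (deriv (fun t => (γ t).point) t) ≤ 1 := by
    filter_upwards [hlip.ae_differentiableAt_real] with t ht _
    exact hg.formNorm_le_of_hasDerivAt hγ.lipschitz ht.hasDerivAt
  have hdist : ENNReal.ofReal (b - a) ≤ ENNReal.ofReal (glen g σ a b) := by
    have hle := hσ.gEDist_le (g := g)
    rwa [← edist_def, hγ.edist_eq, edist_comm, edist_dist, Real.dist_eq,
      abs_of_nonneg (sub_nonneg.2 hab)] at hle
  calc _ ≤ 1 * (b - a) := hg.glen_le_mul_sub (hac a b) hab hspeed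
    _ = b - a := one_mul _
    _ ≤ glen g σ a b := (ENNReal.ofReal_le_ofReal_iff (glen_nonneg hab)).1 hdist

end IsUniformMetric

end ClassA

theorem stmt3_general (d : ℕ)
    (R : EuclideanSpace ℝ (Fin (d + 1)) ≃ₗᵢ[ℝ] EuclideanSpace ℝ (Fin (d + 1)))
    (g : V d → V d →L[ℝ] V d →L[ℝ] ℝ)
    (hgcont : ContinuousOn g (sphereCylinder d))
    (hgsymm : ∀ q ∈ sphereCylinder d, ∀ v w : V d, g q v w = g q w v)
    (hgpos : ∀ q ∈ sphereCylinder d, ∀ v : V d, v ≠ 0 → 0 < g q v v)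
    (hginv : ∀ q ∈ sphereCylinder d, ∀ v w : V d,
      g (q.1 + 1, R q.2) (v.1, R v.2) (w.1, R w.2) = g q v w) :
    ∃ γ : ACIn d, (∀ a b : ℝ, IsACOnN γ a b) ∧ (∃ t₁ t₂ : ℝ, γ.f t₁ ≠ γ.f t₂) ∧
      ∀ t₁ t₂ : ℝ, t₁ ≤ t₂ → ∀ σ : ACIn d, IsACOnN σ t₁ t₂ →
        σ.f t₁ = γ.f t₁ → σ.f t₂ = γ.f t₂ →
        glen g γ t₁ t₂ ≤ glen g σ t₁ t₂ := by
  have hmove := exists_mem_affineIsometries_fst_mem_Icc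
    (deckTransformation_mem_affineIsometries hginv)
  obtain ⟨c, C, hg⟩ := exists_isUniformMetric hgcont hgsymm hgpos hmove
  obtain ⟨γ, hγ⟩ := hg.exists_isometry_real hmove
  obtain ⟨ρ, hργ, hρ, hmin⟩ := hg.isClassA_of_isometry hγ
  refine ⟨ρ, hρ, ⟨0, 1, fun h01 => zero_ne_one (hγ.injective ?_)⟩,
    fun t₁ t₂ ht σ hσ h₁ h₂ => hmin t₁ t₂ ht σ ⟨ht, hσ, h₁, h₂⟩⟩
  exact RiemannianCylinder.ext (by rw [← hργ, ← hργ, h01])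

/-- For `d ≥ 2`, `R ∈ O(d+1)` and any smooth `τ`-invariant Riemannian
metric `g` on `N = ℝ × S^d` (where `τ(x,p) = (x+1, Rp)`), there exists a nonconstant
locally absolutely continuous Class-A minimizing curve in `N`. In particular every smooth
metric on `S¹ × S^d`, `d ≥ 2`, admits a Class-A geodesic. -/
theorem stmt3 (d : ℕ) (hd : 2 ≤ d)
    (R : EuclideanSpace ℝ (Fin (d + 1)) ≃ₗᵢ[ℝ] EuclideanSpace ℝ (Fin (d + 1)))
    (g : V d → V d →L[ℝ] V d →L[ℝ] ℝ)
    (hgsmooth : ContDiff ℝ (⊤ : ℕ∞) g)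
    (hgsymm : ∀ q : V d, ‖q.2‖ = 1 → ∀ v w : V d, g q v w = g q w v)
    (hgpos : ∀ q : V d, ‖q.2‖ = 1 → ∀ v : V d, v ≠ 0 → 0 < g q v v)
    (hginv : ∀ q : V d, ‖q.2‖ = 1 → ∀ v w : V d,
      g (q.1 + 1, R q.2) (v.1, R v.2) (w.1, R w.2) = g q v w) :
    ∃ γ : ACIn d, (∀ a b : ℝ, IsACOnN γ a b) ∧ (∃ t₁ t₂ : ℝ, γ.f t₁ ≠ γ.f t₂) ∧
      ∀ t₁ t₂ : ℝ, t₁ ≤ t₂ → ∀ σ : ACIn d, IsACOnN σ t₁ t₂ →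
        σ.f t₁ = γ.f t₁ → σ.f t₂ = γ.f t₂ →
        glen g γ t₁ t₂ ≤ glen g σ t₁ t₂ := by
  exact stmt3_general d R g hgsmooth.continuous.continuousOn hgsymm hgpos hginv
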